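/- Let p be a prime and let C' = {(t,n) ∈ ℝ×ℤ : n ≤ 0 and t + n·log p ≥ 0}. A real number u ≠ 0 satisfies liminf_{q→∞} q·|q|_p·⟨qu⟩ = 0 (the liminf taken over positive integers q) if and only if the orbit α^{C'} x_{u,0} = {α^{(t,n)} x_{u,0} : (t,n) ∈ C'} does not have compact closure in X. -/

import Mathlib

open Matrix MatrixGroups

/-- Topology on the special linear group, induced from the space of matrices. -/
instance Matrix.SpecialLinearGroup.topologicalSpace {n : Type*} [DecidableEq n] [Fintype n]
    {R : Type*} [CommRing R] [TopologicalSpace R] :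
    TopologicalSpace (Matrix.SpecialLinearGroup n R) :=
  TopologicalSpace.induced (fun A => (A : Matrix n n R)) inferInstance

/-- The ring `ℤ[1/p]`, realized as the localization of `ℤ` away from `p`. -/
abbrev ZInvP (p : ℕ) : Type := Localization.Away (p : ℤ)

/-- The canonical ring homomorphism `ℤ[1/p] → ℝ`. -/
noncomputable def zInvPToR (p : ℕ) [Fact p.Prime] : ZInvP p →+* ℝ :=
  Localization.awayLift (Int.castRingHom ℝ) (p : ℤ) (by
    have hp : ((p : ℤ) : ℝ) ≠ 0 := by
      exact_mod_cast Int.natCast_ne_zero.mpr (Fact.out : p.Prime).ne_zero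
    simpa [isUnit_iff_ne_zero] using hp)

/-- The canonical ring homomorphism `ℤ[1/p] → ℚ_p`. -/
noncomputable def zInvPToQp (p : ℕ) [Fact p.Prime] : ZInvP p →+* ℚ_[p] :=
  Localization.awayLift (Int.castRingHom ℚ_[p]) (p : ℤ) (by
    have hp : ((p : ℤ) : ℚ_[p]) ≠ 0 := by
      exact_mod_cast Int.natCast_ne_zero.mpr (Fact.out : p.Prime).ne_zero
    simpa [isUnit_iff_ne_zero] using hp)

/-- The group `G = SL(2,ℝ) × SL(2,ℚ_p)`. -/
abbrev GP (p : ℕ) [Fact p.Prime] : Type := SL(2, ℝ) × SL(2, ℚ_[p])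

/-- The diagonal embedding `ι : SL(2,ℤ[1/p]) → G`, `ι(A) = (A, A)`. -/
noncomputable def iotaP (p : ℕ) [Fact p.Prime] : SL(2, ZInvP p) →* GP p :=
  (Matrix.SpecialLinearGroup.map (zInvPToR p)).prod
    (Matrix.SpecialLinearGroup.map (zInvPToQp p))

/-- The lattice `Γ = ι(SL(2,ℤ[1/p]))` as a subgroup of `G`. -/
noncomputable def GammaP (p : ℕ) [Fact p.Prime] : Subgroup (GP p) := (iotaP p).range

/-- The homogeneous space `X = G/Γ` (with the quotient topology). -/
abbrev XP (p : ℕ) [Fact p.Prime] : Type := GP p ⧸ GammaP p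

/-- The element `α^(t,n) = (diag(e^{-t}, e^t), diag(pⁿ, p^{-n}))` of `G`; it acts on `X`
by left multiplication. -/
noncomputable def adiagP (p : ℕ) [Fact p.Prime] (t : ℝ) (n : ℤ) : GP p :=
  (⟨!![Real.exp (-t), 0; 0, Real.exp t], by
      simp [Matrix.det_fin_two_of, ← Real.exp_add]⟩,
   ⟨!![(p : ℚ_[p]) ^ n, 0; 0, (p : ℚ_[p]) ^ (-n)], by
      have hp : (p : ℚ_[p]) ≠ 0 := Nat.cast_ne_zero.mpr (Fact.out : p.Prime).ne_zero
      simp [Matrix.det_fin_two_of, _root_.zpow_neg,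
        mul_inv_cancel₀ (zpow_ne_zero n hp)]⟩)

/-- The point `x_{u,v} = ([[1,0],[u,1]], [[1,0],[v,1]])Γ ∈ X`. -/
noncomputable def xuvP (p : ℕ) [Fact p.Prime] (u : ℝ) (v : ℚ_[p]) : XP p :=
  QuotientGroup.mk
    ((⟨!![1, 0; u, 1], by simp [Matrix.det_fin_two_of]⟩,
      ⟨!![1, 0; v, 1], by simp [Matrix.det_fin_two_of]⟩) : GP p)

/-- `nearestIntDist z` is the distance from `z` to the nearest integer, denoted ⟨z⟩. -/
noncomputable def nearestIntDist (z : ℝ) : ℝ := ⨅ k : ℤ, |z - (k : ℝ)|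

/-- The orbit `α^{C'} x` of `x` under the cone `C' = {(t,n) : n ≤ 0, t + n·log p ≥ 0}`. -/
noncomputable def coneOrbitP' (p : ℕ) [Fact p.Prime] (x : XP p) : Set (XP p) :=
  {y | ∃ (t : ℝ) (n : ℤ), n ≤ 0 ∧ 0 ≤ t + (n : ℝ) * Real.log p ∧ y = adiagP p t n • x}

/-!
Modulo `Γ`, the point `α^{(t,-m)} x_{u,0}` is represented by `(M, 1)` with
`M = diag(e^{-τ}, e^τ) · [[1, 0], [p^{2m}u, 1]]` and `τ = t - m log p`, so the cone becomes `τ ≥ 0`,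
`m ≥ 0`. For integers `a > 0` and `b`, the vector `M(a, b)` is `(e^{-τ}a, e^τ(p^{2m}ua + b))`; it is
short for a suitable `τ ≥ 0` exactly when `a|p^{2m}ua + b|` is small (Dani's correspondence). By
Mahler's criterion the orbit is therefore relatively compact if and only if `a|p^{2m}ua + b|` is
bounded below uniformly in `m`, `a` and `b`. Taking `q = p^{2m}a`, these numbers are comparable, up
to a factor `p`, with `q·|q|_p·⟨qu⟩`.

Reduction to a compact set uses the fundamental domain of `SL(2,ℤ)` on the upper half plane and the
compactness of `SL(2,ℤ_p)`. In the other direction, a compact set of `g` bounds the product of the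
norms of the two components of `gz`, for nonzero `z ∈ ℤ[1/p]²`, below by the product formula.
-/

open Filter Topology

section SpecialLinearGroupTopology

variable {n R : Type*} [Fintype n] [DecidableEq n] [CommRing R] [TopologicalSpace R]
  [IsTopologicalRing R]

-- Mathlib's topology on `SpecialLinearGroup n R` is definitionally the induced one used here, but
-- instance search does not see through the difference.
instance specialLinearGroup_isTopologicalGroup : IsTopologicalGroup (SpecialLinearGroup n R) :=
  SpecialLinearGroup.topologicalGroup

instance specialLinearGroup_locallyCompactSpace [T1Space R] [LocallyCompactSpace R] :
    LocallyCompactSpace (SpecialLinearGroup n R) :=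
  have : LocallyCompactSpace (Matrix n n R) := Function.locallyCompactSpace_of_finite
  SpecialLinearGroup.isClosedEmbedding_val.locallyCompactSpace

instance specialLinearGroup_compactSpace [T1Space R] [CompactSpace R] :
    CompactSpace (SpecialLinearGroup n R) :=
  have : CompactSpace (Matrix n n R) := Function.compactSpace
  SpecialLinearGroup.isClosedEmbedding_val.compactSpace

end SpecialLinearGroupTopology

theorem isCompact_closure_iff_exists_subset_image_mk {G : Type*} [Group G] [TopologicalSpace G]
    [IsTopologicalGroup G] [LocallyCompactSpace G] {Γ : Subgroup G} {S : Set (G ⧸ Γ)} :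
    IsCompact (closure S) ↔
      ∃ K : Set G, IsCompact K ∧ S ⊆ (QuotientGroup.mk : G → G ⧸ Γ) '' K := by
  constructor
  · intro hS
    suffices ∃ K : Set G, IsCompact K ∧ closure S ⊆ (QuotientGroup.mk : G → G ⧸ Γ) '' K from
      this.imp fun _ hK => ⟨hK.1, subset_closure.trans hK.2⟩
    refine hS.induction_on ⟨∅, isCompact_empty, Set.empty_subset _⟩
      (fun _ _ hst => .imp fun _ hK => ⟨hK.1, hst.trans hK.2⟩) ?_ fun x _ => ?_
    · rintro s t ⟨K, hK, hs⟩ ⟨L, hL, ht⟩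
      exact ⟨K ∪ L, hK.union hL, Set.image_union .. ▸ Set.union_subset_union hs ht⟩
    · obtain ⟨g, rfl⟩ := QuotientGroup.mk_surjective x
      obtain ⟨K, hK, hgK⟩ := exists_compact_mem_nhds g
      have hmem : QuotientGroup.mk '' K ∈ 𝓝 (g : G ⧸ Γ) :=
        QuotientGroup.nhds_eq Γ g ▸ image_mem_map hgK
      exact ⟨_, mem_nhdsWithin_of_mem_nhds hmem, K, hK, subset_rfl⟩
  · rintro ⟨K, hK, hSK⟩
    obtain ⟨V, hV, hV1⟩ := exists_compact_mem_nhds (1 : G)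
    refine ((hV.inv.mul hK).image QuotientGroup.continuous_mk).of_isClosed_subset
      isClosed_closure fun x hx => ?_
    obtain ⟨g, rfl⟩ := QuotientGroup.mk_surjective x
    have hVg : QuotientGroup.mk '' ((· * g) '' V) ∈ 𝓝 (g : G ⧸ Γ) := by
      rw [QuotientGroup.nhds_eq, ← one_mul g, ← map_mul_right_nhds_one, one_mul]
      exact image_mem_map (image_mem_map hV1)
    obtain ⟨_, ⟨_, ⟨v, hv, rfl⟩, rfl⟩, hvS⟩ := mem_closure_iff_nhds.1 hx _ hVg
    obtain ⟨k, hk, hkv⟩ := hSK hvS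
    refine ⟨v⁻¹ * k, Set.mul_mem_mul (Set.inv_mem_inv.2 hv) hk, ?_⟩
    rw [QuotientGroup.eq] at hkv ⊢
    simpa [mul_assoc] using hkv

section ModularReduction

open UpperHalfPlane

theorem pi_fin_two_norm_eq_max {E : Type*} [SeminormedAddGroup E] (v : Fin 2 → E) :
    ‖v‖ = max ‖v 0‖ ‖v 1‖ := by
  refine le_antisymm ((pi_norm_le_iff_of_nonempty _).2 fun i => ?_)
    (max_le (norm_le_pi_norm v 0) (norm_le_pi_norm v 1))
  fin_cases i <;> simp

theorem im_inv_smul_I (g : SL(2, ℝ)) :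
    (g⁻¹ • I).im = (g 0 0 ^ 2 + g 1 0 ^ 2)⁻¹ := by
  have hdet : g 1 1 * g 0 0 - g 0 1 * g 1 0 = 1 := by
    rw [mul_comm, ← Matrix.det_fin_two, g.det_coe]
  rw [← UpperHalfPlane.coe_im, coe_specialLinearGroup_apply, SpecialLinearGroup.SL2_inv_expl]
  simp [Complex.div_im, Complex.normSq_apply, ← sub_div, hdet, sq]

-- One half of Mahler's criterion: vectors of length at least `ε` in the lattice `gℤ²` bound the
-- height of the point to which `g⁻¹ • I` is reduced in the fundamental domain.
theorem exists_isCompact_forall_exists_mul_map_mem {ε : ℝ} (hε : 0 < ε) :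
    ∃ K : Set SL(2, ℝ), IsCompact K ∧ ∀ g : SL(2, ℝ),
      (∀ v : Fin 2 → ℤ, v ≠ 0 → ε ≤ ‖g.1 *ᵥ (Int.cast ∘ v)‖) →
        ∃ γ : SL(2, ℤ), g * SpecialLinearGroup.map (Int.castRingHom ℝ) γ ∈ K := by
  refine ⟨((· • I) ⁻¹' ModularGroup.truncatedFundamentalDomain (ε ^ 2)⁻¹)⁻¹,
    (isProperMap_smul_I.isCompact_preimage
      (ModularGroup.isCompact_truncatedFundamentalDomain _)).inv, fun g hg => ?_⟩
  obtain ⟨γ, hγ⟩ : ∃ γ : SL(2, ℤ), γ⁻¹ • g⁻¹ • I ∈ ModularGroup.fd :=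
    (ModularGroup.exists_smul_mem_fd (g⁻¹ • I)).imp' (·⁻¹) fun δ hδ => by rwa [inv_inv]
  set h := g * SpecialLinearGroup.map (Int.castRingHom ℝ) γ with hh
  have hfd : h⁻¹ • I = γ⁻¹ • g⁻¹ • I := by
    rw [hh, _root_.mul_inv_rev, ← map_inv, mul_smul]
    exact (ModularGroup.sl_moeb γ⁻¹ _).symm
  have hcol : g.1 *ᵥ (Int.cast ∘ γ.1.col 0) = h.1.col 0 := by
    ext i
    simp [hh, Matrix.mulVec, dotProduct, Matrix.mul_apply]
  have hcol_ne : γ.1.col 0 ≠ 0 := fun h0 => by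
    simpa [γ.1.det_eq_zero_of_column_eq_zero 0 (congrFun h0)] using γ.det_coe
  have hε_le : ε ≤ max |h 0 0| |h 1 0| := by
    simpa [hcol, pi_fin_two_norm_eq_max] using hg _ hcol_ne
  refine ⟨γ, show h⁻¹ • I ∈ ModularGroup.truncatedFundamentalDomain _ from ⟨hfd ▸ hγ, ?_⟩⟩
  rw [im_inv_smul_I]
  refine inv_anti₀ (by positivity) ?_
  rcases le_max_iff.1 hε_le with h0 | h1
  · nlinarith [sq_abs (h 0 0), sq_nonneg (h 1 0)]
  · nlinarith [sq_abs (h 1 0), sq_nonneg (h 0 0)]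

end ModularReduction

section PadicArithmetic

variable {p : ℕ} [Fact p.Prime]

@[simp]
theorem zInvPToR_algebraMap (k : ℤ) : zInvPToR p (algebraMap ℤ (ZInvP p) k) = k := by
  simp [zInvPToR]

@[simp]
theorem zInvPToQp_algebraMap (k : ℤ) : zInvPToQp p (algebraMap ℤ (ZInvP p) k) = k := by
  simp [zInvPToQp]

theorem natCast_mul_norm_pow_mul (n a : ℕ) :
    ((p ^ n * a : ℕ) : ℝ) * ‖((p ^ n * a : ℕ) : ℚ_[p])‖ = a * ‖(a : ℚ_[p])‖ := by
  have hp : (p : ℝ) ≠ 0 := Nat.cast_ne_zero.2 (Fact.out : p.Prime).ne_zero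
  push_cast
  rw [norm_mul, Padic.norm_p_pow, _root_.zpow_neg, zpow_natCast]
  field_simp

theorem one_le_natCast_mul_norm {q : ℕ} (hq : q ≠ 0) : 1 ≤ (q : ℝ) * ‖(q : ℚ_[p])‖ := by
  obtain ⟨n, a, ha, rfl⟩ :=
    Nat.exists_eq_pow_mul_and_not_dvd hq p (Fact.out : p.Prime).ne_one
  have hnorm : ‖(a : ℚ_[p])‖ = 1 :=
    Padic.norm_natCast_eq_one_iff.2 (((Fact.out : p.Prime).coprime_iff_not_dvd).2 ha)
  rw [natCast_mul_norm_pow_mul, hnorm, mul_one, Nat.one_le_cast]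
  exact Nat.one_le_iff_ne_zero.2 (by rintro rfl; simp at ha)

theorem one_le_abs_mul_norm {z : ZInvP p} (hz : z ≠ 0) :
    1 ≤ |zInvPToR p z| * ‖zInvPToQp p z‖ := by
  have hp : (p : ℝ) ≠ 0 := Nat.cast_ne_zero.2 (Fact.out : p.Prime).ne_zero
  obtain ⟨n, k, hk⟩ := IsLocalization.Away.surj (p : ℤ) z
  have hk_ne : k ≠ 0 := by
    rintro rfl
    rw [map_zero] at hk
    exact hz ((IsLocalization.Away.algebraMap_pow_isUnit (p : ℤ) n).mul_left_eq_zero.1 hk)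
  have hR := congrArg (zInvPToR p) hk
  have hQ := congrArg (zInvPToQp p) hk
  simp only [map_mul, map_pow, zInvPToR_algebraMap, zInvPToQp_algebraMap, Int.cast_natCast]
    at hR hQ
  calc 1 ≤ (k.natAbs : ℝ) * ‖(k.natAbs : ℚ_[p])‖ :=
        one_le_natCast_mul_norm (Int.natAbs_ne_zero.2 hk_ne)
    _ = |(k : ℝ)| * ‖(k : ℚ_[p])‖ := by
        rw [norm_natAbs, Nat.cast_natAbs, Int.cast_abs]
    _ = |zInvPToR p z| * ‖zInvPToQp p z‖ := by
        rw [← hR, ← hQ, abs_mul, norm_mul, Padic.norm_p_pow, _root_.zpow_neg, zpow_natCast,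
          abs_pow, Nat.abs_cast]
        field_simp

end PadicArithmetic

section Content

variable {p : ℕ} [Fact p.Prime]

/-- The content of the vector `gz ∈ ℝ² × ℚ_p²`, for `z ∈ ℤ[1/p]²` embedded diagonally: the product
of the two sup norms. Its infimum over `z ≠ 0` measures how deep `gΓ` lies in the cusp. -/
noncomputable def vectorContent (g : GP p) (z : Fin 2 → ZInvP p) : ℝ :=
  ‖g.1.1 *ᵥ (zInvPToR p ∘ z)‖ * ‖g.2.1 *ᵥ (zInvPToQp p ∘ z)‖

theorem vectorContent_mul_iotaP (g : GP p) (γ : SL(2, ZInvP p)) (z : Fin 2 → ZInvP p) :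
    vectorContent (g * iotaP p γ) z = vectorContent g (γ.1 *ᵥ z) := by
  have h {R : Type} [CommRing R] (f : ZInvP p →+* R) :
      f ∘ (γ.1 *ᵥ z) = γ.1.map f *ᵥ (f ∘ z) :=
    funext (f.map_mulVec γ.1 z)
  simp only [vectorContent, h, Matrix.mulVec_mulVec]
  rfl

theorem one_le_vectorContent_one {z : Fin 2 → ZInvP p} (hz : z ≠ 0) : 1 ≤ vectorContent 1 z := by
  obtain ⟨i, hi⟩ := Function.ne_iff.1 hz
  calc 1 ≤ |zInvPToR p (z i)| * ‖zInvPToQp p (z i)‖ := one_le_abs_mul_norm hi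
    _ ≤ ‖zInvPToR p ∘ z‖ * ‖zInvPToQp p ∘ z‖ :=
        mul_le_mul (norm_le_pi_norm (zInvPToR p ∘ z) i) (norm_le_pi_norm (zInvPToQp p ∘ z) i)
          (norm_nonneg _) (norm_nonneg _)
    _ = vectorContent 1 z := by simp [vectorContent]

attribute [local instance] Matrix.linftyOpNormedAddCommGroup

theorem norm_le_norm_inv_mul_norm_mulVec {n K : Type*} [Fintype n] [DecidableEq n]
    [NormedField K] (A : SpecialLinearGroup n K) (v : n → K) :
    ‖v‖ ≤ ‖(A⁻¹).1‖ * ‖A.1 *ᵥ v‖ := by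
  have hA : (A⁻¹).1 * A.1 = 1 := congrArg Subtype.val (inv_mul_cancel A)
  calc ‖v‖ = ‖(A⁻¹).1 *ᵥ (A.1 *ᵥ v)‖ := by rw [Matrix.mulVec_mulVec, hA, Matrix.one_mulVec]
    _ ≤ _ := Matrix.linfty_opNorm_mulVec _ _

theorem one_le_norm_inv_mul_norm_inv_mul_vectorContent (g : GP p) {z : Fin 2 → ZInvP p}
    (hz : z ≠ 0) :
    1 ≤ ‖(g⁻¹).1.1‖ * ‖(g⁻¹).2.1‖ * vectorContent g z := by
  calc 1 ≤ vectorContent 1 z := one_le_vectorContent_one hz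
    _ = ‖zInvPToR p ∘ z‖ * ‖zInvPToQp p ∘ z‖ := by simp [vectorContent]
    _ ≤ _ := mul_le_mul (norm_le_norm_inv_mul_norm_mulVec g.1 _)
        (norm_le_norm_inv_mul_norm_mulVec g.2 _) (norm_nonneg _) (by positivity)
    _ = _ := mul_mul_mul_comm ..

theorem exists_pos_le_vectorContent {S : Set (XP p)} (hS : IsCompact (closure S)) :
    ∃ ε > 0, ∀ g : GP p, QuotientGroup.mk g ∈ S → ∀ z ≠ 0, ε ≤ vectorContent g z := by
  obtain ⟨K, hK, hSK⟩ := isCompact_closure_iff_exists_subset_image_mk.1 hS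
  obtain ⟨C, hC⟩ := hK.exists_bound_of_continuousOn
    (f := fun g : GP p => ‖(g⁻¹).1.1‖ * ‖(g⁻¹).2.1‖) (by fun_prop)
  refine ⟨(max C 1)⁻¹, by positivity, fun g hg z hz => ?_⟩
  obtain ⟨k, hk, hkg⟩ := hSK hg
  obtain ⟨γ, hγ⟩ := QuotientGroup.eq.1 hkg
  obtain rfl : k * iotaP p γ = g := by rw [hγ, mul_inv_cancel_left]
  have hz' : γ.1 *ᵥ z ≠ 0 := (SpecialLinearGroup.toLin' γ).map_ne_zero_iff.2 hz
  have hkC : ‖(k⁻¹).1.1‖ * ‖(k⁻¹).2.1‖ ≤ max C 1 :=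
    (Real.le_norm_self _).trans ((hC k hk).trans (le_max_left C 1))
  rw [vectorContent_mul_iotaP, inv_le_iff_one_le_mul₀' (by positivity)]
  exact (one_le_norm_inv_mul_norm_inv_mul_vectorContent k hz').trans
    (mul_le_mul_of_nonneg_right hkC (by unfold vectorContent; positivity))

end Content

section OrbitRepresentatives

/-- The matrix `diag(e^{-τ}, e^τ) · [[1, 0], [U, 1]]`; up to `Γ`, these represent the points of the
cone orbits. -/
noncomputable def flowShear (τ U : ℝ) : SL(2, ℝ) :=
  ⟨!![Real.exp (-τ), 0; Real.exp τ * U, Real.exp τ], by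
    simp [Matrix.det_fin_two_of, ← Real.exp_add]⟩

theorem flowShear_mulVec (τ U a b : ℝ) :
    (flowShear τ U).1 *ᵥ ![a, b] = ![Real.exp (-τ) * a, Real.exp τ * (U * a + b)] := by
  ext i
  fin_cases i <;> simp [flowShear] <;> ring

variable {p : ℕ} [Fact p.Prime]

-- The two sides differ by `ι (diag(p^m, p^{-m}))`.
theorem mk_flowShear_eq_smul (u t : ℝ) (m : ℕ) :
    (QuotientGroup.mk (flowShear (t - m * Real.log p) (p ^ (2 * m) * u), 1) : XP p) =
      adiagP p t (-m) • xuvP p u 0 := by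
  have hp : 0 < (p : ℝ) := Nat.cast_pos.2 (Fact.out : p.Prime).pos
  have hp' : (p : ℚ_[p]) ≠ 0 := Nat.cast_ne_zero.2 (Fact.out : p.Prime).ne_zero
  obtain ⟨w, hw⟩ := IsLocalization.Away.algebraMap_isUnit (S := ZInvP p) (p : ℤ)
  have hwR : zInvPToR p w = p := by rw [hw]; simp
  have hwQ : zInvPToQp p w = p := by rw [hw]; simp
  have hdet : (!![(w : ZInvP p) ^ m, 0; 0, (↑w⁻¹ : ZInvP p) ^ m]).det = 1 := by
    simp [Matrix.det_fin_two_of, ← mul_pow]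
  have hexp : Real.exp (t - m * Real.log p) = Real.exp t * ((p : ℝ) ^ m)⁻¹ := by
    rw [Real.exp_sub, Real.exp_nat_mul, Real.exp_log hp, div_eq_mul_inv]
  symm
  refine QuotientGroup.eq.2 ⟨⟨_, hdet⟩, eq_inv_mul_iff_mul_eq.2 ?_⟩
  refine Prod.ext (Subtype.ext ?_) (Subtype.ext ?_)
  · change !![Real.exp (-t), 0; 0, Real.exp t] * !![1, 0; u, 1] *
        (!![(w : ZInvP p) ^ m, 0; 0, (↑w⁻¹ : ZInvP p) ^ m]).map (zInvPToR p) =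
      !![Real.exp (-(t - m * Real.log p)), 0;
        Real.exp (t - m * Real.log p) * (p ^ (2 * m) * u), Real.exp (t - m * Real.log p)]
    rw [Real.exp_neg, Real.exp_neg, hexp, pow_mul']
    ext i j
    fin_cases i <;> fin_cases j <;> simp [Matrix.mul_apply, hwR] <;> field_simp
  · change !![(p : ℚ_[p]) ^ (-m : ℤ), 0; 0, (p : ℚ_[p]) ^ (-(-m) : ℤ)] * !![1, 0; 0, 1] *
        (!![(w : ZInvP p) ^ m, 0; 0, (↑w⁻¹ : ZInvP p) ^ m]).map (zInvPToQp p) = 1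
    ext i j
    fin_cases i <;> fin_cases j <;> simp [Matrix.mul_apply, hp', hwQ]

theorem mem_coneOrbitP'_xuvP_zero_iff {u : ℝ} {y : XP p} :
    y ∈ coneOrbitP' p (xuvP p u 0) ↔ ∃ τ ≥ 0, ∃ m : ℕ,
      QuotientGroup.mk (flowShear τ (p ^ (2 * m) * u), 1) = y := by
  constructor
  · rintro ⟨t, n, hn, ht, rfl⟩
    obtain ⟨m, rfl⟩ : ∃ m : ℕ, n = -m := ⟨n.natAbs, Int.eq_neg_natAbs_of_nonpos hn⟩
    refine ⟨t - m * Real.log p, ?_, m, mk_flowShear_eq_smul u t m⟩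
    simpa [sub_eq_add_neg] using ht
  · rintro ⟨τ, hτ, m, rfl⟩
    refine ⟨τ + m * Real.log p, -m, by simp, by simpa using hτ, ?_⟩
    rw [← mk_flowShear_eq_smul, add_sub_cancel_right]

end OrbitRepresentatives

section DaniCorrespondence

-- At the time `τ` with `e^τ = 2a/ε`, the first coordinate of the moved vector is only `ε/2`.
theorem sq_half_le_mul_abs_of_le_norm_flowShear_mulVec {ε U a b : ℝ} (hε : 0 < ε) (hε1 : ε ≤ 1)
    (ha : 1 ≤ a) (h : ∀ τ ≥ 0, ε ≤ ‖(flowShear τ U).1 *ᵥ ![a, b]‖) :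
    ε ^ 2 / 2 ≤ a * |U * a + b| := by
  have ha0 : 0 < a := by linarith
  have hexp : Real.exp (Real.log (2 * a / ε)) = 2 * a / ε := Real.exp_log (by positivity)
  have hτ : 0 ≤ Real.log (2 * a / ε) := Real.log_nonneg ((one_le_div hε).2 (by linarith))
  have hle := h _ hτ
  rw [flowShear_mulVec, pi_fin_two_norm_eq_max, Real.exp_neg, hexp] at hle
  have hfirst : ‖(2 * a / ε)⁻¹ * a‖ = ε / 2 := by
    rw [Real.norm_of_nonneg (by positivity)]
    field_simp
  have hsecond : ε ≤ 2 * a / ε * |U * a + b| := by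
    refine (le_max_iff.1 hle).elim (fun h1 => ?_) fun h2 => ?_
    · exact absurd (h1.trans_eq hfirst) (by linarith)
    · simpa [abs_mul, abs_of_pos, ha0, hε] using h2
  calc ε ^ 2 / 2 = ε / 2 * ε := by ring
    _ ≤ ε / 2 * (2 * a / ε * |U * a + b|) := by gcongr
    _ = a * |U * a + b| := by field_simp

theorem min_le_norm_flowShear_mulVec {c τ U : ℝ} (hτ : 0 ≤ τ)
    (h : ∀ (a : ℕ) (b : ℤ), 0 < a → c ≤ a * |U * a + b|) {v : Fin 2 → ℤ} (hv : v ≠ 0) :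
    min c 1 ≤ ‖(flowShear τ U).1 *ᵥ (Int.cast ∘ v)‖ := by
  obtain ⟨a, b, rfl⟩ : ∃ a b, v = ![a, b] := ⟨v 0, v 1, by ext i; fin_cases i <;> rfl⟩
  set x := Real.exp (-τ) * |(a : ℝ)| with hx
  set y := Real.exp τ * |U * a + b| with hy
  have hnorm : ‖(flowShear τ U).1 *ᵥ (Int.cast ∘ ![a, b])‖ = max x y := by
    rw [show (Int.cast ∘ ![a, b] : Fin 2 → ℝ) = ![(a : ℝ), b] by ext i; fin_cases i <;> rfl,
      flowShear_mulVec, pi_fin_two_norm_eq_max]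
    simp [hx, hy]
  rw [hnorm]
  obtain rfl | ha := eq_or_ne a 0
  · have hb : b ≠ 0 := by rintro rfl; simp at hv
    have hb1 : (1 : ℝ) ≤ |(b : ℝ)| := by exact_mod_cast Int.one_le_abs hb
    have hy1 : 1 ≤ y := by
      simpa [hy] using one_le_mul_of_one_le_of_one_le (Real.one_le_exp hτ) hb1
    exact (min_le_right c 1).trans (hy1.trans (le_max_right x y))
  · have hxy : c ≤ x * y := by
      have hxy_eq : x * y = |(a : ℝ)| * |U * a + b| := by
        rw [hx, hy, mul_mul_mul_comm, ← Real.exp_add]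
        simp
      rw [hxy_eq]
      obtain ⟨n, rfl | rfl⟩ := a.eq_nat_or_neg
      · simpa using h n b (by omega)
      · simpa [neg_add_eq_sub, ← sub_eq_add_neg, abs_sub_comm (b : ℝ)] using h n (-b) (by omega)
    rcases le_total 1 x with hx1 | hx1
    · exact (min_le_right c 1).trans (hx1.trans (le_max_left x y))
    · exact (min_le_left c 1).trans
        (hxy.trans ((mul_le_of_le_one_left (by positivity) hx1).trans (le_max_right x y)))

end DaniCorrespondence

theorem liminf_eq_zero_iff_not_exists_pos {α : Type*} {l : Filter α} {f : α → ℝ}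
    (hf : ∀ a, 0 ≤ f a) (hl : l.IsCoboundedUnder (· ≥ ·) f) :
    liminf f l = 0 ↔ ¬ ∃ c > 0, ∀ᶠ a in l, c ≤ f a := by
  have hnonneg : 0 ≤ liminf f l := le_liminf_of_le hl (.of_forall hf)
  have hbdd : l.IsBoundedUnder (· ≥ ·) f := isBoundedUnder_of ⟨0, hf⟩
  rw [← not_iff_not, not_not, ← ne_eq, ← hnonneg.lt_iff_ne']
  constructor
  · intro h
    obtain ⟨c, hc, hcf⟩ := exists_between h
    exact ⟨c, hc, (eventually_lt_of_lt_liminf hcf hbdd).mono fun _ => le_of_lt⟩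
  · rintro ⟨c, hc, h⟩
    exact hc.trans_le (le_liminf_of_le hl h)

section NearestIntDist

theorem nearestIntDist_le (z : ℝ) (k : ℤ) : nearestIntDist z ≤ |z - k| :=
  ciInf_le ⟨0, Set.forall_mem_range.2 fun _ => abs_nonneg _⟩ k

theorem nearestIntDist_nonneg (z : ℝ) : 0 ≤ nearestIntDist z :=
  le_ciInf fun _ => abs_nonneg _

theorem nearestIntDist_eq_abs_sub_round (z : ℝ) : nearestIntDist z = |z - round z| :=
  le_antisymm (nearestIntDist_le z _) (le_ciInf fun k => round_le z k)

theorem nearestIntDist_natCast_mul_le (k : ℕ) (z : ℝ) :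
    nearestIntDist (k * z) ≤ k * nearestIntDist z :=
  calc nearestIntDist (k * z) ≤ |k * z - (k * round z : ℤ)| := nearestIntDist_le _ _
    _ = k * nearestIntDist z := by
      rw [nearestIntDist_eq_abs_sub_round, Int.cast_mul, Int.cast_natCast, ← mul_sub, abs_mul,
        Nat.abs_cast]

theorem frequently_natCast_mul_nearestIntDist_le_one (u : ℝ) :
    ∃ᶠ q : ℕ in atTop, q * nearestIntDist (q * u) ≤ 1 := by
  refine frequently_atTop.2 fun Q => ?_
  obtain ⟨k, hk0, hkn, hk⟩ := Real.exists_nat_abs_mul_sub_round_le u (Nat.succ_pos (Q ^ 3))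
  rw [← nearestIntDist_eq_abs_sub_round, le_div_iff₀ (by positivity)] at hk
  have hdist := nearestIntDist_nonneg (k * u)
  have hkn' : (k : ℝ) ≤ (Q ^ 3 : ℕ) + 1 := by exact_mod_cast hkn
  push_cast at hk hkn'
  rcases le_total Q k with hQk | hkQ
  · exact ⟨k, hQk, by nlinarith⟩
  · refine ⟨Q * k, Nat.le_mul_of_pos_right Q hk0, ?_⟩
    have hkQ' : (k : ℝ) ≤ Q := by exact_mod_cast hkQ
    calc ((Q * k : ℕ) : ℝ) * nearestIntDist ((Q * k : ℕ) * u)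
        ≤ (Q * Q) * (Q * nearestIntDist (k * u)) := by
          rw [Nat.cast_mul, mul_assoc (Q : ℝ) k u]
          gcongr
          · exact nearestIntDist_nonneg _
          · exact nearestIntDist_natCast_mul_le Q _
      _ ≤ 1 := by nlinarith

end NearestIntDist

section MixedProduct

/-- The quantity `q·|q|_p·⟨qu⟩` of the `p`-adic Littlewood conjecture. -/
noncomputable def mixedProduct (p : ℕ) [Fact p.Prime] (u : ℝ) (q : ℕ) : ℝ :=
  q * ‖(q : ℚ_[p])‖ * nearestIntDist (q * u)

/-- The real number `u` is badly approximable in the mixed sense: `q·|q|_p·⟨qu⟩` is bounded away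
from zero over `q ≥ 1`, so that `u` is a counterexample to the `p`-adic Littlewood conjecture. -/
def MixedBadlyApproximable (p : ℕ) [Fact p.Prime] (u : ℝ) : Prop :=
  ∃ c > 0, ∀ q : ℕ, 0 < q → c ≤ mixedProduct p u q

variable {p : ℕ} [Fact p.Prime] {u : ℝ}

theorem mixedProduct_nonneg (q : ℕ) : 0 ≤ mixedProduct p u q :=
  mul_nonneg (by positivity) (nearestIntDist_nonneg _)

theorem mixedProduct_mul_le (k q : ℕ) :
    mixedProduct p u (k * q) ≤ k ^ 2 * mixedProduct p u q := by
  have hnorm : ‖((k * q : ℕ) : ℚ_[p])‖ ≤ ‖(q : ℚ_[p])‖ := by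
    rw [Nat.cast_mul, norm_mul]
    exact mul_le_of_le_one_left (norm_nonneg _) (IsUltrametricDist.norm_natCast_le_one ℚ_[p] k)
  have hdist : nearestIntDist ((k * q : ℕ) * u) ≤ k * nearestIntDist (q * u) := by
    rw [Nat.cast_mul, mul_assoc]
    exact nearestIntDist_natCast_mul_le k _
  calc mixedProduct p u (k * q)
      ≤ (k * q : ℕ) * ‖(q : ℚ_[p])‖ * (k * nearestIntDist (q * u)) := by
        unfold mixedProduct
        gcongr
        exact nearestIntDist_nonneg _
    _ = k ^ 2 * mixedProduct p u q := by
        rw [mixedProduct, Nat.cast_mul]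
        ring

theorem mixedBadlyApproximable_iff_eventually :
    MixedBadlyApproximable p u ↔ ∃ c > 0, ∀ᶠ q in atTop, c ≤ mixedProduct p u q := by
  refine ⟨fun ⟨c, hc, h⟩ => ⟨c, hc, eventually_atTop.2 ⟨1, h⟩⟩, fun ⟨c, hc, h⟩ => ?_⟩
  obtain ⟨Q, hQ⟩ := eventually_atTop.1 h
  refine ⟨c / (Q + 1 : ℕ) ^ 2, by positivity, fun q hq => ?_⟩
  rw [div_le_iff₀' (by positivity)]
  exact (hQ _ (by nlinarith)).trans (mixedProduct_mul_le (Q + 1) q)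

theorem mixedProduct_pow_mul_le (n a : ℕ) (b : ℤ) :
    mixedProduct p u (p ^ n * a) ≤ a * |(p : ℝ) ^ n * u * a + b| := by
  rw [mixedProduct, natCast_mul_norm_pow_mul]
  refine mul_le_mul
    (mul_le_of_le_one_right a.cast_nonneg (IsUltrametricDist.norm_natCast_le_one ℚ_[p] a))
    ((nearestIntDist_le _ (-b)).trans_eq ?_) (nearestIntDist_nonneg _) a.cast_nonneg
  push_cast
  ring_nf

-- Write `q = p^{2m + r} · d` with `r < 2` and `p ∤ d`, and put `a = p^r · d`.
theorem exists_mul_abs_le_mul_mixedProduct {q : ℕ} (hq : 0 < q) :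
    ∃ (m a : ℕ) (b : ℤ), 0 < a ∧
      a * |(p : ℝ) ^ (2 * m) * u * a + b| ≤ p * mixedProduct p u q := by
  have hp : p.Prime := Fact.out
  obtain ⟨n, d, hd, rfl⟩ := Nat.exists_eq_pow_mul_and_not_dvd hq.ne' p hp.ne_one
  have hnorm : ‖(d : ℚ_[p])‖ = 1 :=
    Padic.norm_natCast_eq_one_iff.2 ((hp.coprime_iff_not_dvd).2 hd)
  have hd0 : 0 < d := Nat.pos_of_ne_zero (by rintro rfl; simp at hd)
  have hpow : p ^ (n % 2) ≤ p := by
    simpa using Nat.pow_le_pow_right hp.pos (show n % 2 ≤ 1 by omega)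
  have hq_eq : (p ^ n * d : ℕ) * u = (p : ℝ) ^ (2 * (n / 2)) * u * (p ^ (n % 2) * d : ℕ) := by
    nth_rw 1 [← Nat.div_add_mod n 2]
    push_cast
    ring
  refine ⟨n / 2, p ^ (n % 2) * d, -round ((p ^ n * d : ℕ) * u),
    Nat.mul_pos (Nat.pow_pos hp.pos) hd0, ?_⟩
  calc _ = (p ^ (n % 2) * d : ℕ) * nearestIntDist ((p ^ n * d : ℕ) * u) := by
        rw [nearestIntDist_eq_abs_sub_round, ← hq_eq, Int.cast_neg, sub_eq_add_neg]
    _ ≤ (p * d : ℕ) * nearestIntDist ((p ^ n * d : ℕ) * u) := by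
        gcongr
        exact nearestIntDist_nonneg _
    _ = p * mixedProduct p u (p ^ n * d) := by
        rw [mixedProduct, natCast_mul_norm_pow_mul, hnorm, mul_one, Nat.cast_mul, mul_assoc]

theorem mixedBadlyApproximable_iff_forall_mul_abs :
    MixedBadlyApproximable p u ↔
      ∃ c > 0, ∀ (m a : ℕ) (b : ℤ), 0 < a → c ≤ a * |(p : ℝ) ^ (2 * m) * u * a + b| := by
  have hp : 0 < p := (Fact.out : p.Prime).pos
  refine ⟨fun ⟨c, hc, h⟩ => ⟨c, hc, fun m a b ha => ?_⟩,
    fun ⟨c, hc, h⟩ => ⟨c / p, by positivity, fun q hq => ?_⟩⟩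
  · exact (h _ (by positivity)).trans (mixedProduct_pow_mul_le _ _ _)
  · obtain ⟨m, a, b, ha, hle⟩ := exists_mul_abs_le_mul_mixedProduct (p := p) (u := u) hq
    rw [div_le_iff₀' (by positivity)]
    exact (h m a b ha).trans hle

theorem frequently_mixedProduct_le_one : ∃ᶠ q in atTop, mixedProduct p u q ≤ 1 :=
  (frequently_natCast_mul_nearestIntDist_le_one u).mono fun q hq =>
    (mul_le_mul_of_nonneg_right (mul_le_of_le_one_right q.cast_nonneg
      (IsUltrametricDist.norm_natCast_le_one ℚ_[p] q)) (nearestIntDist_nonneg _)).trans hq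

theorem liminf_mixedProduct_eq_zero_iff :
    liminf (mixedProduct p u) atTop = 0 ↔ ¬ MixedBadlyApproximable p u := by
  rw [liminf_eq_zero_iff_not_exists_pos mixedProduct_nonneg
    (.of_frequently_le frequently_mixedProduct_le_one), mixedBadlyApproximable_iff_eventually]

end MixedProduct

section OrbitCompactness

variable {p : ℕ} [Fact p.Prime] {u : ℝ}

theorem vectorContent_algebraMap_le_norm_mulVec (A : SL(2, ℝ)) (v : Fin 2 → ℤ) :
    vectorContent ((A, 1) : GP p) (algebraMap ℤ (ZInvP p) ∘ v) ≤ ‖A.1 *ᵥ (Int.cast ∘ v)‖ := by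
  have hR : zInvPToR p ∘ algebraMap ℤ (ZInvP p) ∘ v = Int.cast ∘ v :=
    funext fun i => zInvPToR_algebraMap (v i)
  have hQ : zInvPToQp p ∘ algebraMap ℤ (ZInvP p) ∘ v = Int.cast ∘ v :=
    funext fun i => zInvPToQp_algebraMap (v i)
  have hQ_norm : ‖(Int.cast ∘ v : Fin 2 → ℚ_[p])‖ ≤ 1 :=
    (pi_norm_le_iff_of_nonneg one_pos.le).2 fun i => Padic.norm_int_le_one (v i)
  calc vectorContent ((A, 1) : GP p) (algebraMap ℤ (ZInvP p) ∘ v)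
      = ‖A.1 *ᵥ (Int.cast ∘ v)‖ * ‖(1 : Matrix (Fin 2) (Fin 2) ℚ_[p]) *ᵥ (Int.cast ∘ v)‖ := by
        rw [← hR, ← hQ]
        rfl
    _ ≤ ‖A.1 *ᵥ (Int.cast ∘ v)‖ := by
        rw [Matrix.one_mulVec]
        exact mul_le_of_le_one_right (norm_nonneg _) hQ_norm

theorem mixedBadlyApproximable_of_isCompact_closure
    (h : IsCompact (closure (coneOrbitP' p (xuvP p u 0)))) : MixedBadlyApproximable p u := by
  obtain ⟨ε, hε, hcontent⟩ := exists_pos_le_vectorContent h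
  refine mixedBadlyApproximable_iff_forall_mul_abs.2
    ⟨min ε 1 ^ 2 / 2, by positivity, fun m a b ha => ?_⟩
  refine sq_half_le_mul_abs_of_le_norm_flowShear_mulVec (by positivity) (min_le_right ε 1)
    (Nat.one_le_cast.2 ha) fun τ hτ => (min_le_left ε 1).trans ?_
  have hne : algebraMap ℤ (ZInvP p) ∘ ![(a : ℤ), b] ≠ 0 := fun h0 => by
    simpa [ha.ne'] using congrArg (zInvPToR p) (congrFun h0 0)
  have hmem := (mem_coneOrbitP'_xuvP_zero_iff (p := p) (u := u)).2 ⟨τ, hτ, m, rfl⟩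
  have hcast : (Int.cast ∘ ![(a : ℤ), b] : Fin 2 → ℝ) = ![(a : ℝ), b] := by
    ext i
    fin_cases i <;> rfl
  exact hcast ▸ (hcontent _ hmem _ hne).trans (vectorContent_algebraMap_le_norm_mulVec _ _)

theorem isCompact_range_map_padicInt :
    IsCompact (Set.range (SpecialLinearGroup.map (n := Fin 2) (algebraMap ℤ_[p] ℚ_[p]))) :=
  have hcont : Continuous (SpecialLinearGroup.map (n := Fin 2) (algebraMap ℤ_[p] ℚ_[p])) :=
    Continuous.specialLinearGroup_map continuous_subtype_val
  isCompact_range hcont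

theorem isCompact_closure_of_mixedBadlyApproximable (h : MixedBadlyApproximable p u) :
    IsCompact (closure (coneOrbitP' p (xuvP p u 0))) := by
  obtain ⟨c, hc, h⟩ := mixedBadlyApproximable_iff_forall_mul_abs.1 h
  obtain ⟨K, hK, hKγ⟩ :=
    exists_isCompact_forall_exists_mul_map_mem (ε := min c 1) (by positivity)
  refine isCompact_closure_iff_exists_subset_image_mk.2
    ⟨K ×ˢ Set.range (SpecialLinearGroup.map (algebraMap ℤ_[p] ℚ_[p])),
      hK.prod isCompact_range_map_padicInt, fun y hy => ?_⟩
  obtain ⟨τ, hτ, m, rfl⟩ := mem_coneOrbitP'_xuvP_zero_iff.1 hy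
  obtain ⟨γ, hγ⟩ := hKγ (flowShear τ (p ^ (2 * m) * u)) fun v hv =>
    min_le_norm_flowShear_mulVec hτ (h m) hv
  have hι : iotaP p (SpecialLinearGroup.map (algebraMap ℤ (ZInvP p)) γ) =
      (SpecialLinearGroup.map (Int.castRingHom ℝ) γ,
        SpecialLinearGroup.map (algebraMap ℤ_[p] ℚ_[p])
          (SpecialLinearGroup.map (Int.castRingHom ℤ_[p]) γ)) := by
    refine Prod.ext (Subtype.ext ?_) (Subtype.ext ?_) <;> ext i j
    · exact zInvPToR_algebraMap (γ i j)
    · exact (zInvPToQp_algebraMap (γ i j)).trans (PadicInt.coe_intCast _).symm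
  have hmk := QuotientGroup.mk_mul_of_mem (s := GammaP p) (flowShear τ (p ^ (2 * m) * u), 1)
    ⟨SpecialLinearGroup.map (algebraMap ℤ (ZInvP p)) γ, hι⟩
  exact ⟨_, ⟨hγ, _, (one_mul _).symm⟩, hmk⟩

theorem isCompact_closure_coneOrbit_iff :
    IsCompact (closure (coneOrbitP' p (xuvP p u 0))) ↔ MixedBadlyApproximable p u :=
  ⟨mixedBadlyApproximable_of_isCompact_closure, isCompact_closure_of_mixedBadlyApproximable⟩

end OrbitCompactness

/-- For `u ≠ 0`, `liminf_{q → ∞} q·|q|_p·⟨qu⟩ = 0` (over positive integers `q`) holds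
if and only if the orbit `α^{C'} x_{u,0}` does not have compact closure in `X`. -/
theorem dMT_iff_coneOrbit_unbounded (p : ℕ) [Fact p.Prime] (u : ℝ) (hu : u ≠ 0) :
    Filter.liminf
        (fun q : ℕ => (q : ℝ) * (padicNorm p (q : ℚ) : ℝ) * nearestIntDist ((q : ℝ) * u))
        Filter.atTop = 0 ↔
      ¬ IsCompact (closure (coneOrbitP' p (xuvP p u 0))) := by
  have hmixed : (fun q : ℕ => (q : ℝ) * (padicNorm p (q : ℚ) : ℝ) * nearestIntDist (q * u)) =
      mixedProduct p u := by
    ext q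
    rw [mixedProduct, ← Padic.eq_padicNorm, Rat.cast_natCast]
  rw [hmixed, liminf_mixedProduct_eq_zero_iff, isCompact_closure_coneOrbit_iff]
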